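/- Let 0 < α < 1. Suppose u ∈ 𝓛_α(ℝ), i.e. u : ℝ → ℝ is locally integrable with ∫_{-∞}^{+∞} |u(t)|/(1+|t|^{1+α}) dt < ∞, and suppose that ∫_{-∞}^{+∞} u(t)·D_right^α φ(t) dt = 0 for every real-valued Schwartz function φ on ℝ, where D_right^α φ(t) = C_α ∫_t^∞ (φ(t) − φ(τ))/(τ−t)^{1+α} dτ and C_α = 1/|Γ(−α)|. Then u is equal almost everywhere to a constant. -/

import Mathlib

open MeasureTheory Set

/-- The right Marchaud fractional derivative of order `α` of a function of one real
variable: `D_right^α φ(t) = C_α ∫_t^∞ (φ(t) - φ(τ))/(τ-t)^{1+α} dτ`, `C_α = 1/|Γ(-α)|`. -/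
noncomputable def marchaudRight1d (α : ℝ) (φ : ℝ → ℝ) (t : ℝ) : ℝ :=
  (1 / |Real.Gamma (-α)|) * ∫ τ in Ioi t, (φ t - φ τ) / (τ - t) ^ (1 + α)

open Filter Topology
open scoped ContDiff

theorem HasCompactSupport.exists_forall_le_abs_deriv_eq_zero {g : ℝ → ℝ}
    (hg : HasCompactSupport g) :
    ∃ M : ℝ, 1 ≤ M ∧ ∀ t, M ≤ |t| → g t = 0 ∧ deriv g t = 0 ∧ deriv (deriv g) t = 0 := by
  obtain ⟨M, hM⟩ := hg.isCompact.isBounded.exists_norm_le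
  refine ⟨max M 0 + 1, by linarith [le_max_right M 0], fun t ht => ?_⟩
  have h : t ∉ tsupport g := fun h => by
    have := hM t h
    rw [Real.norm_eq_abs] at this
    linarith [le_max_left M 0]
  have h' : t ∉ tsupport (deriv g) := fun h' => h (tsupport_deriv_subset h')
  have h'' : t ∉ tsupport (deriv (deriv g)) := fun h'' => h' (tsupport_deriv_subset h'')
  exact ⟨image_eq_zero_of_notMem_tsupport h, image_eq_zero_of_notMem_tsupport h',
    image_eq_zero_of_notMem_tsupport h''⟩

theorem HasCompactSupport.exists_forall_le_abs_eq_zero {g : ℝ → ℝ} (hg : HasCompactSupport g) :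
    ∃ M : ℝ, 1 ≤ M ∧ ∀ t, M ≤ |t| → g t = 0 :=
  let ⟨M, hM1, hM⟩ := hg.exists_forall_le_abs_deriv_eq_zero
  ⟨M, hM1, fun t ht => (hM t ht).1⟩

/-- A test function with zero mean is the derivative of a test function. -/
theorem exists_deriv_eq_of_integral_eq_zero {g : ℝ → ℝ} (hg : ContDiff ℝ ∞ g)
    (hgc : HasCompactSupport g) (h0 : ∫ t, g t = 0) :
    ∃ η : ℝ → ℝ, ContDiff ℝ ∞ η ∧ HasCompactSupport η ∧ deriv η = g := by
  obtain ⟨M, hM1, hM⟩ := hgc.exists_forall_le_abs_eq_zero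
  have hd : ∀ t, HasDerivAt (fun t => ∫ x in (-M)..t, g x) (g t) t := fun t =>
    intervalIntegral.integral_hasDerivAt_right (hg.continuous.intervalIntegrable _ _)
      (hg.continuous.stronglyMeasurableAtFilter _ _) hg.continuous.continuousAt
  have hderiv : deriv (fun t => ∫ x in (-M)..t, g x) = g := funext fun t => (hd t).deriv
  refine ⟨fun t => ∫ x in (-M)..t, g x, ?_, ?_, hderiv⟩
  · rw [contDiff_infty_iff_deriv, hderiv]
    exact ⟨fun t => (hd t).differentiableAt, hg⟩
  · refine HasCompactSupport.of_support_subset_isCompact (isCompact_Icc (a := -M) (b := M)) ?_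
    intro t ht
    by_contra hcon
    apply ht
    rw [mem_Icc, not_and_or, not_le, not_le] at hcon
    rcases hcon with h | h
    · refine intervalIntegral.integral_zero_ae (Eventually.of_forall fun x hx => hM x ?_)
      rw [uIoc_of_ge h.le] at hx
      rw [abs_of_nonpos (by linarith [hx.2])]
      linarith [hx.2]
    · change ∫ x in (-M)..t, g x = 0
      rw [intervalIntegral.integral_eq_integral_of_support_subset, h0]
      intro x hx
      by_contra hcon
      apply hx
      apply hM
      rw [mem_Ioc, not_and_or, not_lt, not_le] at hcon
      rcases hcon with h' | h'
      · rw [abs_of_nonpos (by linarith)]; linarith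
      · exact (h.trans h').le.trans (le_abs_self x)

/-- A locally integrable function whose distributional derivative vanishes is a.e. constant. -/
theorem MeasureTheory.LocallyIntegrable.ae_eq_const_of_integral_mul_deriv_eq_zero {u : ℝ → ℝ}
    (hu : LocallyIntegrable u)
    (h : ∀ η : ℝ → ℝ, ContDiff ℝ ∞ η → HasCompactSupport η → ∫ t, u t * deriv η t = 0) :
    ∃ c : ℝ, ∀ᵐ t : ℝ ∂volume, u t = c := by
  let b : ContDiffBump (0 : ℝ) := default
  set ρ : ℝ → ℝ := b.normed volume with hρ_def
  have hρ : ContDiff ℝ ∞ ρ := b.contDiff_normed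
  have hρc : HasCompactSupport ρ := b.hasCompactSupport_normed
  have hρ1 : ∫ t, ρ t = 1 := b.integral_normed
  have h_int : ∀ {g : ℝ → ℝ}, ContDiff ℝ ∞ g → HasCompactSupport g →
      Integrable (fun t => g t * u t) := fun hg hgc =>
    hu.integrable_smul_left_of_hasCompactSupport hg.continuous hgc
  refine ⟨∫ t, ρ t * u t, ae_eq_of_integral_contDiff_smul_eq hu
    (locallyIntegrable_const _) fun g hg hgc => ?_⟩
  obtain ⟨η, hη, hηc, hηd⟩ := exists_deriv_eq_of_integral_eq_zero
    (g := fun t => g t - (∫ s, g s) * ρ t) (hg.sub (contDiff_const.mul hρ))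
    (hgc.sub (hρc.mul_left)) (by
      rw [integral_sub (hg.continuous.integrable_of_hasCompactSupport hgc)
        ((hρ.continuous.integrable_of_hasCompactSupport hρc).const_mul _), integral_const_mul, hρ1]
      ring)
  have key := h η hη hηc
  rw [hηd] at key
  have : ∀ t, u t * (g t - (∫ s, g s) * ρ t) = g t * u t - (∫ s, g s) * (ρ t * u t) :=
    fun t => by ring
  simp_rw [this] at key
  rw [integral_sub (h_int hg hgc) ((h_int hρ hρc).const_mul _), integral_const_mul] at key
  simp only [smul_eq_mul]
  rw [integral_mul_const]
  linarith

/-- The right fractional integral of order `α`, without its normalizing constant. -/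
noncomputable def rightFracIntegral (α : ℝ) (g : ℝ → ℝ) (t : ℝ) : ℝ :=
  ∫ r in Ioi (0 : ℝ), r ^ (α - 1) * g (t + r)

theorem locallyIntegrable_indicator_rpow {β : ℝ} (hβ : -1 < β) :
    LocallyIntegrable ((Ioi (0 : ℝ)).indicator fun r => r ^ β) := by
  refine locallyIntegrable_of_norm_le_rpow (C := 1) (α := -β) (by simp) (by simp; linarith)
    (Eventually.of_forall fun r => ?_)
    ((by fun_prop : Measurable fun r : ℝ => r ^ β).indicator measurableSet_Ioi).aestronglyMeasurable
  by_cases hr : r ∈ Ioi (0 : ℝ)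
  · rw [indicator_of_mem hr, Real.norm_of_nonneg (Real.rpow_nonneg (le_of_lt hr) _), neg_neg,
      Real.norm_of_nonneg (le_of_lt hr), one_mul]
  · rw [indicator_of_notMem hr, norm_zero]
    positivity

theorem rightFracIntegral_eq_convolution (α : ℝ) (g : ℝ → ℝ) (t : ℝ) :
    rightFracIntegral α g t = convolution ((Ioi (0 : ℝ)).indicator fun r => r ^ (α - 1))
      (fun x => g (-x)) (ContinuousLinearMap.mul ℝ ℝ) volume (-t) := by
  rw [rightFracIntegral, convolution, ← integral_indicator measurableSet_Ioi]
  refine integral_congr_ae (Eventually.of_forall fun r => ?_)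
  by_cases hr : r ∈ Ioi (0 : ℝ)
  · simp [indicator_of_mem hr, add_comm]
  · simp [indicator_of_notMem hr]

theorem HasCompactSupport.comp_neg' {g : ℝ → ℝ} (hg : HasCompactSupport g) :
    HasCompactSupport fun x => g (-x) :=
  hg.comp_homeomorph (Homeomorph.neg ℝ)

theorem contDiff_rightFracIntegral {α : ℝ} (hα : 0 < α) {g : ℝ → ℝ} (hg : ContDiff ℝ ∞ g)
    (hgc : HasCompactSupport g) : ContDiff ℝ ∞ (rightFracIntegral α g) := by
  rw [funext (rightFracIntegral_eq_convolution α g)]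
  exact (hgc.comp_neg'.contDiff_convolution_right _
    (locallyIntegrable_indicator_rpow (by linarith)) (hg.comp contDiff_neg)).comp contDiff_neg

theorem hasDerivAt_rightFracIntegral {α : ℝ} (hα : 0 < α) {g : ℝ → ℝ} (hg : ContDiff ℝ ∞ g)
    (hgc : HasCompactSupport g) (t : ℝ) :
    HasDerivAt (rightFracIntegral α g) (rightFracIntegral α (deriv g) t) t := by
  have h := (hgc.comp_neg'.hasDerivAt_convolution_right (ContinuousLinearMap.mul ℝ ℝ)
    (locallyIntegrable_indicator_rpow (β := α - 1) (by linarith))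
    ((hg.comp contDiff_neg).of_le (by simp)) (-t)).comp t (hasDerivAt_neg t)
  rw [funext (rightFracIntegral_eq_convolution α g), rightFracIntegral_eq_convolution]
  refine h.congr_deriv ?_
  have hd : (deriv fun x => g (-x)) = fun x => -deriv g (-x) := funext fun x => deriv_comp_neg g x
  simp only [convolution, hd, ContinuousLinearMap.mul_apply', mul_neg, integral_neg]
  ring

theorem rightFracIntegral_eq_zero {α M : ℝ} {g : ℝ → ℝ} (hM : ∀ t, M ≤ |t| → g t = 0) {t : ℝ}
    (ht : M ≤ t) : rightFracIntegral α g t = 0 := by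
  rw [rightFracIntegral, setIntegral_congr_fun (g := fun _ => 0) measurableSet_Ioi, integral_zero]
  intro r hr
  rw [mem_Ioi] at hr
  simp [hM (t + r) (le_trans (by linarith) (le_abs_self _))]

theorem rightFracIntegral_eq_intervalIntegral {α M : ℝ} {g : ℝ → ℝ}
    (hM : ∀ t, M ≤ |t| → g t = 0) {t : ℝ} (ht : t ≤ -M) :
    rightFracIntegral α g t = ∫ x in (-M)..M, (x - t) ^ (α - 1) * g x := by
  rw [intervalIntegral.integral_eq_integral_of_support_subset, rightFracIntegral,
    ← integral_indicator measurableSet_Ioi,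
    ← integral_sub_right_eq_self (fun r => (Ioi (0 : ℝ)).indicator _ r) t]
  · refine integral_congr_ae (Eventually.of_forall fun x => ?_)
    by_cases hx : x - t ∈ Ioi (0 : ℝ)
    · simp [indicator_of_mem hx]
    · rw [mem_Ioi, not_lt] at hx
      simp [hM x (le_trans (by linarith) (neg_le_abs _))]
  · intro x hx
    have h : |x| < M := by
      by_contra h
      exact hx (by simp [hM x (not_lt.1 h)])
    rw [abs_lt] at h
    exact ⟨h.1, h.2.le⟩

theorem intervalIntegral_rpow_mul_deriv {β M : ℝ} (hM0 : 0 ≤ M) {g : ℝ → ℝ} (hg : ContDiff ℝ ∞ g)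
    (hM : ∀ t, M ≤ |t| → g t = 0) {t : ℝ} (ht : t < -M) :
    ∫ x in (-M)..M, (x - t) ^ β * deriv g x
      = -β * ∫ x in (-M)..M, (x - t) ^ (β - 1) * g x := by
  have hpos : ∀ x ∈ uIcc (-M) M, 0 < x - t := fun x hx => by
    rw [uIcc_of_le (by linarith)] at hx
    linarith [hx.1]
  rw [intervalIntegral.integral_mul_deriv_eq_deriv_mul (u' := fun x => β * (x - t) ^ (β - 1))
    (v := g), hM M (le_abs_self M), hM (-M) (by rw [abs_neg]; exact le_abs_self M),
    ← intervalIntegral.integral_const_mul]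
  · simp [mul_assoc]
  · intro x hx
    simpa using ((hasDerivAt_id x).sub_const t).rpow_const (p := β) (Or.inl (hpos x hx).ne')
  · exact fun x _ => (hg.differentiable (by simp) x).hasDerivAt
  · refine ContinuousOn.intervalIntegrable ?_
    exact continuousOn_const.mul (ContinuousOn.rpow_const (by fun_prop)
      fun x hx => Or.inl (hpos x hx).ne')
  · exact (hg.continuous_deriv (by simp)).intervalIntegrable _ _

theorem abs_intervalIntegral_rpow_mul_le {β M : ℝ} (hβ : β ≤ 0) (hM0 : 0 < M) {g : ℝ → ℝ}
    (hg : Continuous g) {t : ℝ} (ht : t ≤ -(2 * M)) :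
    |∫ x in (-M)..M, (x - t) ^ β * g x| ≤ (|t| / 2) ^ β * ∫ x in (-M)..M, |g x| := by
  rw [← intervalIntegral.integral_const_mul, ← Real.norm_eq_abs]
  refine intervalIntegral.norm_integral_le_of_norm_le (by linarith)
    (Eventually.of_forall fun x hx => ?_)
    ((continuous_const.mul hg.abs).intervalIntegrable _ _)
  rw [abs_of_nonpos (by linarith), Real.norm_eq_abs, abs_mul]
  gcongr
  rw [abs_of_nonneg (Real.rpow_nonneg (by linarith [hx.1]) _)]
  exact Real.rpow_le_rpow_of_nonpos (by linarith) (by linarith [hx.1]) hβ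

/-- Passing from a bound near `-∞` to a global decay estimate, for a function vanishing
near `+∞`. -/
theorem exists_abs_le_one_add_abs_rpow {g : ℝ → ℝ} (hg : Continuous g) {M B β : ℝ} (hM : 1 ≤ M)
    (hβ : β ≤ 0) (hB : 0 ≤ B) (h0 : ∀ t, M ≤ t → g t = 0)
    (h1 : ∀ t, t ≤ -(2 * M) → |g t| ≤ (|t| / 2) ^ β * B) :
    ∃ A, 0 ≤ A ∧ ∀ t, |g t| ≤ A * (1 + |t|) ^ β := by
  obtain ⟨K, hK⟩ := (isCompact_Icc (a := -(2 * M)) (b := M)).exists_bound_of_continuousOn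
    hg.continuousOn
  have hK0 : 0 ≤ K := (norm_nonneg _).trans (hK 0 ⟨by linarith, by linarith⟩)
  refine ⟨K * (1 + 2 * M) ^ (-β) + (1 / 4) ^ β * B, by positivity, fun t => ?_⟩
  have hA1 : 0 ≤ K * (1 + 2 * M) ^ (-β) * (1 + |t|) ^ β := by positivity
  have hA2 : 0 ≤ (1 / 4) ^ β * B * (1 + |t|) ^ β := by positivity
  rw [add_mul]
  rcases le_total M t with h | h
  · rw [h0 t h, abs_zero]
    positivity
  rcases le_total t (-(2 * M)) with h' | h'
  · refine (h1 t h').trans (le_trans ?_ (le_add_of_nonneg_left hA1))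
    have : (|t| / 2) ^ β ≤ (1 / 4 * (1 + |t|)) ^ β :=
      Real.rpow_le_rpow_of_nonpos (by positivity)
        (by rw [abs_of_nonpos (by linarith)]; linarith) hβ
    rw [Real.mul_rpow (by norm_num) (by positivity)] at this
    calc _ ≤ (1 / 4) ^ β * (1 + |t|) ^ β * B := by gcongr
      _ = _ := by ring
  · refine le_trans ?_ (le_add_of_nonneg_right hA2)
    refine (hK t ⟨h', h⟩).trans ?_
    have h2 : |t| ≤ 2 * M := abs_le.2 ⟨h', by linarith⟩
    have : (1 + 2 * M) ^ β ≤ (1 + |t|) ^ β :=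
      Real.rpow_le_rpow_of_nonpos (by positivity) (by linarith) hβ
    calc K = K * ((1 + 2 * M) ^ (-β) * (1 + 2 * M) ^ β) := by
          rw [← Real.rpow_add (by linarith)]; simp
      _ ≤ K * ((1 + 2 * M) ^ (-β) * (1 + |t|) ^ β) := by gcongr
      _ = _ := by ring

/-- Decay of the fractional integral of a derivative, and of its own derivative. -/
theorem exists_abs_rightFracIntegral_deriv_le {α : ℝ} (hα0 : 0 < α) (hα1 : α < 1) {h : ℝ → ℝ}
    (hh : ContDiff ℝ ∞ h) (hhc : HasCompactSupport h) :
    ∃ A, 0 ≤ A ∧ (∀ t, |rightFracIntegral α (deriv h) t| ≤ A * (1 + |t|) ^ (α - 2)) ∧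
      ∀ t, |rightFracIntegral α (deriv (deriv h)) t| ≤ A * (1 + |t|) ^ (α - 3) := by
  obtain ⟨M, hM1, hM⟩ := hhc.exists_forall_le_abs_deriv_eq_zero
  have hI : 0 ≤ ∫ x in (-M)..M, |h x| :=
    intervalIntegral.integral_nonneg (by linarith) fun _ _ => abs_nonneg _
  have hh' : ContDiff ℝ ∞ (deriv h) := hh.deriv'
  obtain ⟨A₁, hA₁, h₁⟩ := exists_abs_le_one_add_abs_rpow (M := M) (β := α - 2)
    (g := rightFracIntegral α (deriv h)) (B := |-(α - 1)| * ∫ x in (-M)..M, |h x|)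
    (contDiff_rightFracIntegral hα0 hh' hhc.deriv).continuous hM1
    (by linarith) (by positivity)
    (fun t ht => rightFracIntegral_eq_zero (fun t ht => (hM t ht).2.1) ht) (fun t ht => by
      rw [rightFracIntegral_eq_intervalIntegral (fun t ht => (hM t ht).2.1) (by linarith),
        intervalIntegral_rpow_mul_deriv (by linarith) hh (fun t ht => (hM t ht).1) (by linarith),
        abs_mul, mul_left_comm, show α - 1 - 1 = α - 2 by ring]
      gcongr
      exact abs_intervalIntegral_rpow_mul_le (by linarith) (by linarith) hh.continuous ht)
  obtain ⟨A₂, hA₂, h₂⟩ := exists_abs_le_one_add_abs_rpow (M := M) (β := α - 3)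
    (g := rightFracIntegral α (deriv (deriv h)))
    (B := |-(α - 1)| * (|-(α - 2)| * ∫ x in (-M)..M, |h x|))
    (contDiff_rightFracIntegral hα0 hh'.deriv' hhc.deriv.deriv).continuous hM1
    (by linarith) (by positivity)
    (fun t ht => rightFracIntegral_eq_zero (fun t ht => (hM t ht).2.2) ht) (fun t ht => by
      rw [rightFracIntegral_eq_intervalIntegral (fun t ht => (hM t ht).2.2) (by linarith),
        intervalIntegral_rpow_mul_deriv (by linarith) hh' (fun t ht => (hM t ht).2.1)
          (by linarith),
        show α - 1 - 1 = α - 2 by ring,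
        intervalIntegral_rpow_mul_deriv (by linarith) hh (fun t ht => (hM t ht).1) (by linarith),
        show α - 2 - 1 = α - 3 by ring, abs_mul, abs_mul]
      refine (mul_le_mul_of_nonneg_left (mul_le_mul_of_nonneg_left
        (abs_intervalIntegral_rpow_mul_le (by linarith) (by linarith) hh.continuous ht)
        (abs_nonneg _)) (abs_nonneg _)).trans_eq ?_
      ring)
  refine ⟨max A₁ A₂, le_max_of_le_left hA₁, fun t => (h₁ t).trans ?_, fun t => (h₂ t).trans ?_⟩
  · gcongr; exact le_max_left _ _
  · gcongr; exact le_max_right _ _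

theorem integrableOn_rpow_mul_inv_one_add {α : ℝ} (hα0 : 0 < α) (hα1 : α < 1) :
    IntegrableOn (fun v : ℝ => v ^ (α - 1) * (1 + v)⁻¹) (Ioi 0) := by
  refine (Real.integrableOn_rpowIntegrand₀₁_Ioi ⟨hα0, hα1⟩ zero_le_one).congr_fun
    (fun v hv => ?_) measurableSet_Ioi
  simp only
  rw [Real.rpowIntegrand₀₁_eq_pow_div ⟨hα0, hα1⟩ (le_of_lt hv) zero_le_one, mul_one, add_comm,
    div_eq_mul_inv]

theorem integral_rpow_mul_inv_one_add_pos {α : ℝ} (hα0 : 0 < α) (hα1 : α < 1) :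
    0 < ∫ v in Ioi (0 : ℝ), v ^ (α - 1) * (1 + v)⁻¹ := by
  have h : ∀ v ∈ Ioi (0 : ℝ), 0 < v ^ (α - 1) * (1 + v)⁻¹ := fun v hv => by
    rw [mem_Ioi] at hv
    positivity
  rw [setIntegral_pos_iff_support_of_nonneg_ae
    ((ae_restrict_mem measurableSet_Ioi).mono fun v hv => (h v hv).le)
    (integrableOn_rpow_mul_inv_one_add hα0 hα1),
    inter_eq_right.2 fun v hv => Function.mem_support.2 (h v hv).ne']
  simp

theorem rpow_neg_mul_rightFracIntegral_add {α : ℝ} (g : ℝ → ℝ) (t : ℝ) {s : ℝ} (hs : 0 < s) :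
    s ^ (-α) * rightFracIntegral α g (t + s)
      = ∫ v in Ioi (0 : ℝ), v ^ (α - 1) * g (t + (1 + v) * s) := by
  have h := integral_comp_mul_left_Ioi' (fun r => r ^ (α - 1) * g (t + s + r)) 0 hs
  rw [mul_zero] at h
  rw [rightFracIntegral, ← h, smul_eq_mul, ← integral_const_mul, ← integral_const_mul]
  refine setIntegral_congr_fun measurableSet_Ioi fun v hv => ?_
  have hpow : s ^ (-α) * (s * s ^ (α - 1)) = 1 := by
    rw [← mul_assoc, ← Real.rpow_add_one hs.ne', ← Real.rpow_add hs]
    simp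
  rw [Real.mul_rpow hs.le (le_of_lt hv), show t + s + s * v = t + (1 + v) * s by ring]
  linear_combination (v ^ (α - 1) * g (t + (1 + v) * s)) * hpow

/-- Fractional integrals of orders `α` and `1 - α` of a derivative compose to a multiple of the
identity. -/
theorem integral_rpow_neg_mul_rightFracIntegral_deriv {α : ℝ} (hα0 : 0 < α) (hα1 : α < 1)
    {ψ : ℝ → ℝ} (hψ : ContDiff ℝ ∞ ψ) (hψc : HasCompactSupport ψ) (t : ℝ) :
    ∫ s in Ioi (0 : ℝ), s ^ (-α) * rightFracIntegral α (deriv ψ) (t + s)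
      = -(∫ v in Ioi (0 : ℝ), v ^ (α - 1) * (1 + v)⁻¹) * ψ t := by
  have hg : Continuous (deriv ψ) := hψ.continuous_deriv (by simp)
  have hgi : Integrable fun x => deriv ψ (t + x) :=
    (hg.integrable_of_hasCompactSupport hψc.deriv).comp_add_left t
  have hI : ∫ x in Ioi (0 : ℝ), deriv ψ (t + x) = -ψ t := by
    have hc : HasCompactSupport fun x => ψ (t + x) :=
      hψc.comp_homeomorph (Homeomorph.addLeft t)
    have hs : ContDiff ℝ 1 fun x => ψ (t + x) :=
      (hψ.comp (contDiff_const.add contDiff_id)).of_le (by simp)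
    simpa [deriv_comp_const_add] using HasCompactSupport.integral_Ioi_deriv_eq hs hc 0
  have hscale : ∀ (G : ℝ → ℝ), ∀ v ∈ Ioi (0 : ℝ),
      ∫ s in Ioi (0 : ℝ), G ((1 + v) * s) = (1 + v)⁻¹ * ∫ x in Ioi (0 : ℝ), G x := by
    intro G v hv
    rw [mem_Ioi] at hv
    rw [integral_comp_mul_left_Ioi G 0 (by linarith), mul_zero, smul_eq_mul]
  have h_int : Integrable (fun p : ℝ × ℝ => p.2 ^ (α - 1) * deriv ψ (t + (1 + p.2) * p.1))
      ((volume.restrict (Ioi 0)).prod (volume.restrict (Ioi 0))) := by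
    rw [integrable_prod_iff' (by
      have : Measurable (deriv ψ) := hg.measurable
      exact Measurable.aestronglyMeasurable (by fun_prop))]
    refine ⟨(ae_restrict_mem measurableSet_Ioi).mono fun v hv => ?_, ?_⟩
    · rw [mem_Ioi] at hv
      refine Integrable.const_mul (f := fun s => deriv ψ (t + (1 + v) * s)) ?_ (v ^ (α - 1))
      have := (integrableOn_Ioi_comp_mul_left_iff (fun x => deriv ψ (t + x)) 0
        (by linarith : 0 < 1 + v)).2
      rw [mul_zero] at this
      exact this hgi.integrableOn
    · refine ((integrableOn_rpow_mul_inv_one_add hα0 hα1).mul_const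
        (∫ x in Ioi (0 : ℝ), |deriv ψ (t + x)|)).congr
        ((ae_restrict_mem measurableSet_Ioi).mono fun v hv => ?_)
      simp only [norm_mul, Real.norm_eq_abs]
      rw [integral_const_mul, hscale (fun x => |deriv ψ (t + x)|) v hv,
        abs_of_nonneg (Real.rpow_nonneg (le_of_lt hv) _), mul_assoc]
  rw [setIntegral_congr_fun measurableSet_Ioi
    (fun s hs => rpow_neg_mul_rightFracIntegral_add (deriv ψ) t hs),
    integral_integral_swap h_int, neg_mul, ← mul_neg, ← integral_mul_const]
  refine setIntegral_congr_fun measurableSet_Ioi fun v hv => ?_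
  rw [integral_const_mul, hscale (fun x => deriv ψ (t + x)) v hv, hI, mul_assoc]

theorem marchaudRight1d_eq (α : ℝ) (f : ℝ → ℝ) (t : ℝ) :
    marchaudRight1d α f t
      = (1 / |Real.Gamma (-α)|) * ∫ s in Ioi (0 : ℝ), (f t - f (t + s)) / s ^ (1 + α) := by
  rw [marchaudRight1d, ← integral_indicator measurableSet_Ioi,
    ← integral_indicator measurableSet_Ioi,
    ← integral_add_left_eq_self (fun τ => (Ioi t).indicator _ τ) t]
  congr 2
  ext s
  simp only [indicator_apply, mem_Ioi, lt_add_iff_pos_right, add_sub_cancel_left]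

/-- Quantitative decay of a function and its derivative, sufficient to control its Marchaud
derivative. -/
structure MarchaudDecay (α A : ℝ) (f f' : ℝ → ℝ) : Prop where
  hasDerivAt : ∀ t, HasDerivAt f (f' t) t
  abs_le : ∀ t, |f t| ≤ A * (1 + |t|) ^ (α - 2)
  abs_deriv_le : ∀ t, |f' t| ≤ A * (1 + |t|) ^ (α - 3)

/-- A majorant of the Marchaud difference quotient at `t`, obtained by splitting at
`(1 + |t|) / 2`. -/
noncomputable def marchaudMajorant (α t s : ℝ) : ℝ :=
  if s ≤ (1 + |t|) / 2 then ((1 + |t|) / 2) ^ (α - 3) * s ^ (-α)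
  else ((1 + |t|) / 2) ^ (α - 2) * s ^ (-1 - α)
    + ((1 + |t|) / 2) ^ (-1 - α) * (1 + |t + s|) ^ (α - 2)

namespace MarchaudDecay

variable {α A : ℝ} {f f' : ℝ → ℝ}

theorem nonneg (h : MarchaudDecay α A f f') : 0 ≤ A := by
  simpa using (abs_nonneg _).trans (h.abs_le 0)

theorem continuous (h : MarchaudDecay α A f f') : Continuous f :=
  continuous_iff_continuousAt.2 fun t => (h.hasDerivAt t).continuousAt

theorem abs_quotient_le (h : MarchaudDecay α A f f') (hα0 : 0 < α) (hα1 : α < 1) (t : ℝ) {s : ℝ}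
    (hs : 0 < s) : |(f t - f (t + s)) / s ^ (1 + α)| ≤ A * marchaudMajorant α t s := by
  have hA := h.nonneg
  have ht := abs_nonneg t
  have hp : 0 < s ^ (1 + α) := Real.rpow_pos_of_pos hs _
  rw [marchaudMajorant, abs_div, abs_of_pos hp]
  have hinv : s ^ (-1 - α) = (s ^ (1 + α))⁻¹ := by
    rw [← Real.rpow_neg hs.le]; congr 1; ring
  have hinv' : s ^ (-α) = s / s ^ (1 + α) := by
    rw [eq_div_iff hp.ne', ← Real.rpow_add hs, show -α + (1 + α) = 1 by ring, Real.rpow_one]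
  split_ifs with hsT
  · have hmv := (convex_Icc t (t + s)).norm_image_sub_le_of_norm_hasDerivWithin_le
      (f := f) (f' := f') (C := A * ((1 + |t|) / 2) ^ (α - 3))
      (fun x _ => (h.hasDerivAt x).hasDerivWithinAt) (fun x hx => ?_)
      (right_mem_Icc.2 (by linarith)) (left_mem_Icc.2 (by linarith))
    · rw [Real.norm_eq_abs, Real.norm_eq_abs, sub_add_cancel_left, abs_neg, abs_of_pos hs] at hmv
      calc _ ≤ (A * ((1 + |t|) / 2) ^ (α - 3) * s) / s ^ (1 + α) := by gcongr
        _ = _ := by rw [hinv']; ring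
    · refine (h.abs_deriv_le x).trans (mul_le_mul_of_nonneg_left ?_ hA)
      refine Real.rpow_le_rpow_of_nonpos (by linarith) ?_ (by linarith)
      have : |t| ≤ |x| + s := by
        have h1 := abs_sub_abs_le_abs_sub t x
        rw [abs_sub_comm, abs_of_nonneg (by linarith [hx.1] : 0 ≤ x - t)] at h1
        linarith [hx.2]
      linarith
  · rw [not_le] at hsT
    have h1 : |f t - f (t + s)| ≤
        A * ((1 + |t|) / 2) ^ (α - 2) + A * (1 + |t + s|) ^ (α - 2) := by
      refine (abs_sub _ _).trans (add_le_add ((h.abs_le t).trans ?_) (h.abs_le _))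
      exact mul_le_mul_of_nonneg_left
        (Real.rpow_le_rpow_of_nonpos (by linarith) (by linarith) (by linarith)) hA
    have h2 : s ^ (-1 - α) ≤ ((1 + |t|) / 2) ^ (-1 - α) :=
      Real.rpow_le_rpow_of_nonpos (by linarith) hsT.le (by linarith)
    calc _ ≤ (A * ((1 + |t|) / 2) ^ (α - 2) + A * (1 + |t + s|) ^ (α - 2)) / s ^ (1 + α) := by
          gcongr
      _ = A * (((1 + |t|) / 2) ^ (α - 2) * s ^ (-1 - α)
            + s ^ (-1 - α) * (1 + |t + s|) ^ (α - 2)) := by rw [hinv]; ring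
      _ ≤ _ := by gcongr

end MarchaudDecay

theorem integrable_one_add_abs_rpow {β : ℝ} (hβ : β < -1) :
    Integrable fun x : ℝ => (1 + |x|) ^ β := by
  simpa using integrable_one_add_norm (E := ℝ) (μ := volume) (r := -β) (by simp; linarith)

theorem integrableOn_marchaudMajorant {α : ℝ} (hα0 : 0 < α) (hα1 : α < 1) (t : ℝ) :
    IntegrableOn (marchaudMajorant α t) (Ioc 0 ((1 + |t|) / 2)) ∧
      IntegrableOn (marchaudMajorant α t) (Ioi ((1 + |t|) / 2)) := by
  have hS : 0 < (1 + |t|) / 2 := by positivity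
  constructor
  · refine IntegrableOn.congr_fun (f := fun s => ((1 + |t|) / 2) ^ (α - 3) * s ^ (-α))
      (Integrable.const_mul ?_ _) (fun s hs => ?_) measurableSet_Ioc
    · exact (intervalIntegrable_iff_integrableOn_Ioc_of_le hS.le).1
        (intervalIntegral.intervalIntegrable_rpow' (by linarith))
    · simp [marchaudMajorant, hs.2]
  · refine IntegrableOn.congr_fun (f := fun s => ((1 + |t|) / 2) ^ (α - 2) * s ^ (-1 - α)
      + ((1 + |t|) / 2) ^ (-1 - α) * (1 + |t + s|) ^ (α - 2)) (Integrable.add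
        (Integrable.const_mul ?_ _) (Integrable.const_mul ?_ _)) (fun s hs => ?_) measurableSet_Ioi
    · exact integrableOn_Ioi_rpow_of_lt (by linarith) hS
    · exact ((integrable_one_add_abs_rpow (by linarith)).comp_add_left t).integrableOn
    · simp [marchaudMajorant, not_le.2 (mem_Ioi.1 hs)]

theorem integral_marchaudMajorant_le {α : ℝ} (hα0 : 0 < α) (hα1 : α < 1) (t : ℝ) :
    ∫ s in Ioi (0 : ℝ), marchaudMajorant α t s
      ≤ ((1 / 2 : ℝ) ^ (α - 1) * (1 / (1 - α) + 1 / α) + ∫ x : ℝ, (1 + |x|) ^ (α - 2))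
        * ((1 + |t|) / 2) ^ (-1 - α) := by
  obtain ⟨h₁, h₂⟩ := integrableOn_marchaudMajorant hα0 hα1 t
  have hS : 1 / 2 ≤ (1 + |t|) / 2 := by linarith [abs_nonneg t]
  have hI₁ : ∫ s in Ioc 0 ((1 + |t|) / 2), marchaudMajorant α t s
      = ((1 + |t|) / 2) ^ (α - 3) * (((1 + |t|) / 2) ^ (1 - α) / (1 - α)) := by
    rw [setIntegral_congr_fun (g := fun s => ((1 + |t|) / 2) ^ (α - 3) * s ^ (-α))
      measurableSet_Ioc fun s hs => by simp [marchaudMajorant, hs.2], integral_const_mul,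
      ← intervalIntegral.integral_of_le (by linarith), integral_rpow (Or.inl (by linarith)),
      show -α + 1 = 1 - α by ring, Real.zero_rpow (by linarith), sub_zero]
  have hI₂ : ∫ s in Ioi ((1 + |t|) / 2), marchaudMajorant α t s
      ≤ ((1 + |t|) / 2) ^ (α - 2) * (((1 + |t|) / 2) ^ (-α) / α)
        + ((1 + |t|) / 2) ^ (-1 - α) * ∫ x : ℝ, (1 + |x|) ^ (α - 2) := by
    have hi := (integrable_one_add_abs_rpow (by linarith : α - 2 < -1)).comp_add_left t
    rw [setIntegral_congr_fun (g := fun s => ((1 + |t|) / 2) ^ (α - 2) * s ^ (-1 - α)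
      + ((1 + |t|) / 2) ^ (-1 - α) * (1 + |t + s|) ^ (α - 2))
      measurableSet_Ioi fun s hs => by simp [marchaudMajorant, not_le.2 (mem_Ioi.1 hs)],
      integral_add ((integrableOn_Ioi_rpow_of_lt (by linarith) (by linarith)).const_mul _)
        (hi.integrableOn.const_mul _), integral_const_mul, integral_const_mul,
      integral_Ioi_rpow_of_lt (by linarith) (by linarith), show -1 - α + 1 = -α by ring,
      neg_div_neg_eq]
    gcongr
    rw [← integral_add_left_eq_self (fun x : ℝ => (1 + |x|) ^ (α - 2)) t]
    exact setIntegral_le_integral hi (Eventually.of_forall fun s => by positivity)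
  rw [← Ioc_union_Ioi_eq_Ioi (by linarith : (0 : ℝ) ≤ (1 + |t|) / 2),
    setIntegral_union Ioc_disjoint_Ioi_same measurableSet_Ioi h₁ h₂, hI₁]
  set S := (1 + |t|) / 2
  have hS0 : 0 < S := by linarith
  set J := ∫ x : ℝ, (1 + |x|) ^ (α - 2)
  have e : S ^ (α - 1) ≤ (1 / 2 : ℝ) ^ (α - 1) :=
    Real.rpow_le_rpow_of_nonpos (by norm_num) hS (by linarith)
  have e1 : S ^ (α - 3) * S ^ (1 - α) = S ^ (α - 1) * S ^ (-1 - α) := by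
    rw [← Real.rpow_add hS0, ← Real.rpow_add hS0]; congr 1; ring
  have e2 : S ^ (α - 2) * S ^ (-α) = S ^ (α - 1) * S ^ (-1 - α) := by
    rw [← Real.rpow_add hS0, ← Real.rpow_add hS0]; congr 1; ring
  have h1α : 0 < 1 - α := by linarith
  calc _ ≤ S ^ (α - 3) * (S ^ (1 - α) / (1 - α)) + (S ^ (α - 2) * (S ^ (-α) / α)
        + S ^ (-1 - α) * J) := by gcongr
    _ = (S ^ (α - 1) * (1 / (1 - α) + 1 / α) + J) * S ^ (-1 - α) := by
      linear_combination e1 / (1 - α) + e2 / α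
    _ ≤ _ := by gcongr

theorem integrableOn_Ioi_marchaudMajorant {α : ℝ} (hα0 : 0 < α) (hα1 : α < 1) (t : ℝ) :
    IntegrableOn (marchaudMajorant α t) (Ioi 0) := by
  obtain ⟨h₁, h₂⟩ := integrableOn_marchaudMajorant hα0 hα1 t
  rw [← Ioc_union_Ioi_eq_Ioi (by positivity : (0 : ℝ) ≤ (1 + |t|) / 2)]
  exact h₁.union h₂

theorem measurable_marchaud_quotient {α : ℝ} {f : ℝ → ℝ} (hf : Continuous f) :
    Measurable fun p : ℝ × ℝ => (f p.1 - f (p.1 + p.2)) / p.2 ^ (1 + α) := by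
  have := hf.measurable
  fun_prop

theorem measurable_marchaudRight1d {α : ℝ} {f : ℝ → ℝ} (hf : Continuous f) :
    Measurable (marchaudRight1d α f) := by
  rw [show marchaudRight1d α f = _ from funext (marchaudRight1d_eq α f)]
  exact ((measurable_marchaud_quotient hf).stronglyMeasurable.integral_prod_right
    (ν := volume.restrict (Ioi (0 : ℝ)))).measurable.const_mul _

theorem half_one_add_abs_rpow_le {α : ℝ} (hα0 : 0 < α) (t : ℝ) :
    ((1 + |t|) / 2) ^ (-1 - α) ≤ 2 * 2 ^ (1 + α) / (1 + |t| ^ (1 + α)) := by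
  have ht := abs_nonneg t
  have h1 : 1 ≤ (1 + |t|) ^ (1 + α) := Real.one_le_rpow (by linarith) (by linarith)
  have h2 : |t| ^ (1 + α) ≤ (1 + |t|) ^ (1 + α) :=
    Real.rpow_le_rpow ht (by linarith) (by linarith)
  have h3 : 0 ≤ |t| ^ (1 + α) := by positivity
  rw [show -1 - α = -(1 + α) by ring, Real.rpow_neg (by positivity),
    Real.div_rpow (by positivity) (by norm_num), inv_div,
    div_le_div_iff₀ (by positivity) (by positivity)]
  nlinarith [Real.rpow_pos_of_pos (zero_lt_two (α := ℝ)) (1 + α)]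

namespace MarchaudDecay

variable {α A : ℝ} {f f' : ℝ → ℝ}

theorem exists_abs_marchaudRight1d_le (hα0 : 0 < α) (hα1 : α < 1) (A : ℝ) :
    ∃ K : ℝ, ∀ f f' : ℝ → ℝ, MarchaudDecay α A f f' →
      ∀ t, |marchaudRight1d α f t| ≤ K / (1 + |t| ^ (1 + α)) := by
  set J := (1 / 2 : ℝ) ^ (α - 1) * (1 / (1 - α) + 1 / α) + ∫ x : ℝ, (1 + |x|) ^ (α - 2) with hJ
  have h1α : 0 < 1 - α := by linarith
  have hJ0 : 0 ≤ J := add_nonneg (by positivity) (integral_nonneg fun x => by positivity)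
  refine ⟨(1 / |Real.Gamma (-α)|) * (A * (J * (2 * 2 ^ (1 + α)))), fun f f' h t => ?_⟩
  have hA := h.nonneg
  rw [marchaudRight1d_eq, abs_mul, abs_of_nonneg (by positivity), mul_div_assoc]
  refine mul_le_mul_of_nonneg_left ?_ (by positivity)
  calc _ ≤ ∫ s in Ioi (0 : ℝ), A * marchaudMajorant α t s := by
        rw [← Real.norm_eq_abs]
        refine norm_integral_le_of_norm_le ((integrableOn_Ioi_marchaudMajorant hα0 hα1 t).const_mul A) ?_
        exact (ae_restrict_mem measurableSet_Ioi).mono fun s hs => h.abs_quotient_le hα0 hα1 t hs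
    _ ≤ A * (J * ((1 + |t|) / 2) ^ (-1 - α)) := by
        rw [integral_const_mul]
        exact mul_le_mul_of_nonneg_left (integral_marchaudMajorant_le hα0 hα1 t) hA
    _ ≤ A * (J * (2 * 2 ^ (1 + α) / (1 + |t| ^ (1 + α)))) := by
        gcongr
        exact half_one_add_abs_rpow_le hα0 t
    _ = _ := by ring

theorem tendsto_marchaudRight1d (hα0 : 0 < α) (hα1 : α < 1) {F F' : ℕ → ℝ → ℝ}
    (hF : ∀ n, MarchaudDecay α A (F n) (F' n)) (hlim : ∀ x, Tendsto (F · x) atTop (𝓝 (f x)))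
    (t : ℝ) :
    Tendsto (fun n => marchaudRight1d α (F n) t) atTop (𝓝 (marchaudRight1d α f t)) := by
  simp only [marchaudRight1d_eq]
  refine Tendsto.const_mul _ (tendsto_integral_of_dominated_convergence
    (fun s => A * marchaudMajorant α t s) (fun n => ?_)
    ((integrableOn_Ioi_marchaudMajorant hα0 hα1 t).const_mul A) (fun n => ?_) ?_)
  · exact ((measurable_marchaud_quotient (hF n).continuous).comp
      measurable_prodMk_left).aestronglyMeasurable
  · exact (ae_restrict_mem measurableSet_Ioi).mono fun s hs => (hF n).abs_quotient_le hα0 hα1 t hs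
  · exact Eventually.of_forall fun s => ((hlim t).sub (hlim (t + s))).div_const _

theorem abs_le_const (h : MarchaudDecay α A f f') (hα1 : α < 1) (t : ℝ) : |f t| ≤ A :=
  (h.abs_le t).trans (mul_le_of_le_one_right h.nonneg
    (Real.rpow_le_one_of_one_le_of_nonpos (by linarith [abs_nonneg t]) (by linarith)))

theorem abs_deriv_le_const (h : MarchaudDecay α A f f') (hα1 : α < 1) (t : ℝ) : |f' t| ≤ A :=
  (h.abs_deriv_le t).trans (mul_le_of_le_one_right h.nonneg
    (Real.rpow_le_one_of_one_le_of_nonpos (by linarith [abs_nonneg t]) (by linarith)))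

theorem measurable_deriv (h : MarchaudDecay α A f f') : Measurable f' := by
  rw [show f' = deriv f from funext fun t => (h.hasDerivAt t).deriv.symm]
  exact _root_.measurable_deriv f

theorem integrableOn_rpow_neg_mul_deriv (h : MarchaudDecay α A f f') (hα0 : 0 < α) (hα1 : α < 1)
    (t : ℝ) : IntegrableOn (fun s => s ^ (-α) * f' (t + s)) (Ioi 0) := by
  have hm : Measurable fun s : ℝ => s ^ (-α) * f' (t + s) := by
    have := h.measurable_deriv
    fun_prop
  rw [← Ioc_union_Ioi_eq_Ioi (zero_le_one (α := ℝ))]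
  refine IntegrableOn.union ?_ ?_
  · have : IntegrableOn (fun s : ℝ => s ^ (-α) * A) (Ioc 0 1) :=
      ((intervalIntegrable_iff_integrableOn_Ioc_of_le zero_le_one).1
        (intervalIntegral.intervalIntegrable_rpow' (by linarith))).mul_const A
    refine this.mono' hm.aestronglyMeasurable
      ((ae_restrict_mem measurableSet_Ioc).mono fun s hs => ?_)
    rw [norm_mul, Real.norm_of_nonneg (Real.rpow_nonneg hs.1.le _)]
    exact mul_le_mul_of_nonneg_left (h.abs_deriv_le_const hα1 _) (Real.rpow_nonneg hs.1.le _)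
  · refine Integrable.mono' (((integrable_one_add_abs_rpow (β := α - 3)
      (by linarith)).comp_add_left t).const_mul A).integrableOn hm.aestronglyMeasurable
      ((ae_restrict_mem measurableSet_Ioi).mono fun s hs => ?_)
    have hs1 : (1 : ℝ) < s := hs
    have hs0 : 0 ≤ s ^ (-α) := Real.rpow_nonneg (by linarith) _
    rw [norm_mul, Real.norm_of_nonneg hs0]
    refine (mul_le_of_le_one_left (norm_nonneg _) ?_).trans (h.abs_deriv_le _)
    exact Real.rpow_le_one_of_one_le_of_nonpos hs1.le (by linarith)

theorem marchaudRight1d_eq_integral_deriv (h : MarchaudDecay α A f f') (hα0 : 0 < α) (hα1 : α < 1)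
    (t : ℝ) : marchaudRight1d α f t
      = (1 / |Real.Gamma (-α)|) * (-(1 / α) * ∫ s in Ioi (0 : ℝ), s ^ (-α) * f' (t + s)) := by
  have hA := h.nonneg
  rw [marchaudRight1d_eq]
  congr 1
  have hquot : ∀ s ∈ Ioi (0 : ℝ), (f t - f (t + s)) / s ^ (1 + α)
      = (f t - f (t + s)) * s ^ (-1 - α) := fun s hs => by
    rw [div_eq_mul_inv, ← Real.rpow_neg (le_of_lt hs)]; congr 2; ring
  rw [setIntegral_congr_fun measurableSet_Ioi hquot]
  have hu : ∀ s ∈ Ioi (0 : ℝ), HasDerivAt (fun s => f t - f (t + s)) (-f' (t + s)) s :=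
    fun s _ => by simpa using ((h.hasDerivAt (t + s)).comp_const_add t s).const_sub (f t)
  have hv : ∀ s ∈ Ioi (0 : ℝ), HasDerivAt (fun s : ℝ => s ^ (-α) / (-α)) (s ^ (-1 - α)) s :=
    fun s hs => by
      refine ((Real.hasDerivAt_rpow_const (p := -α)
        (Or.inl (ne_of_gt hs))).div_const (-α)).congr_deriv ?_
      rw [mul_div_cancel_left₀ _ (by linarith)]; congr 1; ring
  have huv : IntegrableOn ((fun s => f t - f (t + s)) * fun s : ℝ => s ^ (-1 - α)) (Ioi 0) := by
    refine IntegrableOn.congr_fun (f := fun s => (f t - f (t + s)) / s ^ (1 + α)) ?_ hquot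
      measurableSet_Ioi
    refine ((integrableOn_Ioi_marchaudMajorant hα0 hα1 t).const_mul A).mono'
      ((measurable_marchaud_quotient h.continuous).comp measurable_prodMk_left).aestronglyMeasurable ?_
    exact (ae_restrict_mem measurableSet_Ioi).mono fun s hs => h.abs_quotient_le hα0 hα1 t hs
  have hi := h.integrableOn_rpow_neg_mul_deriv hα0 hα1 t
  have huv' : IntegrableOn ((fun s => -f' (t + s)) * fun s : ℝ => s ^ (-α) / (-α)) (Ioi 0) := by
    refine (hi.const_mul (1 / α)).congr (Eventually.of_forall fun s => ?_)
    simp only [Pi.mul_apply]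
    field_simp
  have h0 : Tendsto ((fun s => f t - f (t + s)) * fun s : ℝ => s ^ (-α) / (-α)) (𝓝[>] 0) (𝓝 0) := by
    refine squeeze_zero_norm' (a := fun s : ℝ => A / α * s ^ (1 - α)) ?_ ?_
    · filter_upwards [self_mem_nhdsWithin] with s hs
      have hs : 0 < s := hs
      have hmv := convex_univ.norm_image_sub_le_of_norm_hasDerivWithin_le (f := f) (f' := f')
        (C := A) (fun x _ => (h.hasDerivAt x).hasDerivWithinAt)
        (fun x _ => h.abs_deriv_le_const hα1 x) (mem_univ (t + s)) (mem_univ t)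
      rw [Real.norm_eq_abs, Real.norm_eq_abs, sub_add_cancel_left, abs_neg, abs_of_pos hs] at hmv
      rw [Pi.mul_apply, norm_mul, norm_div, norm_neg, Real.norm_of_nonneg hα0.le,
        Real.norm_of_nonneg (Real.rpow_nonneg hs.le _), Real.norm_eq_abs,
        show (1 - α) = 1 + -α by ring, Real.rpow_add hs, Real.rpow_one]
      calc _ ≤ A * s * (s ^ (-α) / α) := by gcongr
        _ = _ := by ring
    · have : Tendsto (fun s : ℝ => A / α * s ^ (1 - α)) (𝓝 0) (𝓝 (A / α * 0 ^ (1 - α))) :=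
        ((Real.continuousAt_rpow_const 0 (1 - α) (Or.inr (by linarith))).tendsto).const_mul _
      rw [Real.zero_rpow (by linarith), mul_zero] at this
      exact this.mono_left nhdsWithin_le_nhds
  have hinf : Tendsto ((fun s => f t - f (t + s)) * fun s : ℝ => s ^ (-α) / (-α)) atTop (𝓝 0) := by
    refine squeeze_zero_norm' (a := fun s : ℝ => (A + A) / α * s ^ (-α)) ?_ ?_
    · filter_upwards [eventually_gt_atTop 0] with s hs
      rw [Pi.mul_apply, norm_mul, norm_div, norm_neg, Real.norm_of_nonneg hα0.le,
        Real.norm_of_nonneg (Real.rpow_nonneg hs.le _), Real.norm_eq_abs]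
      have := (abs_sub (f t) (f (t + s))).trans
        (add_le_add (h.abs_le_const hα1 t) (h.abs_le_const hα1 (t + s)))
      calc _ ≤ (A + A) * (s ^ (-α) / α) := by gcongr
        _ = _ := by ring
    · simpa using (tendsto_rpow_neg_atTop hα0).const_mul ((A + A) / α)
  rw [integral_Ioi_mul_deriv_eq_deriv_mul hu hv huv huv' h0 hinf, sub_zero, zero_sub,
    ← integral_neg, ← integral_const_mul]
  refine integral_congr_ae (Eventually.of_forall fun s => ?_)
  field_simp

end MarchaudDecay

/-- The Marchaud derivative inverts the fractional integral up to a nonzero constant. -/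
theorem exists_marchaudRight1d_rightFracIntegral {α : ℝ} (hα0 : 0 < α) (hα1 : α < 1) :
    ∃ c : ℝ, c ≠ 0 ∧ ∀ (A : ℝ) (ψ : ℝ → ℝ), ContDiff ℝ ∞ ψ → HasCompactSupport ψ →
      MarchaudDecay α A (rightFracIntegral α ψ) (rightFracIntegral α (deriv ψ)) →
      ∀ t, marchaudRight1d α (rightFracIntegral α ψ) t = c * ψ t := by
  have hB := integral_rpow_mul_inv_one_add_pos hα0 hα1
  have hΓ : Real.Gamma (-α) ≠ 0 := Real.Gamma_ne_zero fun m hm => by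
    rcases m with _ | m
    · simp at hm; linarith
    · push_cast at hm; linarith [m.cast_nonneg (α := ℝ)]
  refine ⟨(1 / |Real.Gamma (-α)|) * ((1 / α) * ∫ v in Ioi (0 : ℝ), v ^ (α - 1) * (1 + v)⁻¹),
    by positivity, fun A ψ hψ hψc h t => ?_⟩
  rw [h.marchaudRight1d_eq_integral_deriv hα0 hα1,
    integral_rpow_neg_mul_rightFracIntegral_deriv hα0 hα1 hψ hψc]
  ring

/-- Cutting off a smooth function at growing scales preserves its decay uniformly. -/
theorem MarchaudDecay.exists_compactSupport_approx {α A : ℝ} {f f' : ℝ → ℝ}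
    (h : MarchaudDecay α A f f') (hf : ContDiff ℝ ∞ f) :
    ∃ (A' : ℝ) (F F' : ℕ → ℝ → ℝ), (∀ n, ContDiff ℝ ∞ (F n)) ∧ (∀ n, HasCompactSupport (F n)) ∧
      (∀ n, MarchaudDecay α A' (F n) (F' n)) ∧ ∀ x, Tendsto (F · x) atTop (𝓝 (f x)) := by
  let χ : ContDiffBump (0 : ℝ) := default
  have hA := h.nonneg
  have hχ : ContDiff ℝ ∞ (χ : ℝ → ℝ) := χ.contDiff
  have hχc : HasCompactSupport (χ : ℝ → ℝ) := χ.hasCompactSupport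
  have hχ1 : ∀ x, |χ x| ≤ 1 := fun x => by rw [abs_of_nonneg χ.nonneg]; exact χ.le_one
  obtain ⟨C, hC⟩ := (hχc.deriv.mul_right (f' := fun x : ℝ => 1 + |x|)).exists_bound_of_continuous
    (by have := hχ.continuous_deriv (by simp); fun_prop)
  have hC0 : 0 ≤ C := (norm_nonneg _).trans (hC 0)
  have hR : ∀ n : ℕ, (0 : ℝ) < n + 1 := fun n => by positivity
  have hχd : ∀ (n : ℕ) (t : ℝ), |deriv χ (t / (n + 1)) * (1 / (n + 1))| ≤ C * (1 + |t|)⁻¹ := by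
    intro n t
    have h1 := hC (t / (n + 1))
    simp only [Pi.mul_apply, norm_mul, Real.norm_eq_abs] at h1
    rw [abs_of_nonneg (by positivity : 0 ≤ 1 + |t / (n + 1)|), abs_div, abs_of_pos (hR n)] at h1
    rw [abs_mul, abs_of_pos (by have := hR n; positivity : (0 : ℝ) < 1 / (n + 1)),
      ← div_eq_mul_inv, le_div_iff₀ (by positivity)]
    refine le_trans ?_ h1
    rw [mul_assoc]
    refine mul_le_mul_of_nonneg_left ?_ (abs_nonneg _)
    have : 1 / ((n : ℝ) + 1) ≤ 1 := by rw [div_le_one (hR n)]; linarith [n.cast_nonneg (α := ℝ)]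
    calc _ = 1 / ((n : ℝ) + 1) + |t| / (n + 1) := by ring
      _ ≤ _ := by gcongr
  refine ⟨A * (1 + C), fun n t => χ (t / (n + 1)) * f t,
    fun n t => deriv χ (t / (n + 1)) * (1 / (n + 1)) * f t + χ (t / (n + 1)) * f' t,
    fun n => (hχ.comp (contDiff_id.div_const _)).mul hf, fun n => ?_, fun n => ⟨fun t => ?_,
      fun t => ?_, fun t => ?_⟩, fun x => ?_⟩
  · refine HasCompactSupport.mul_right ?_
    exact hχc.comp_homeomorph (Homeomorph.mulRight₀ ((n : ℝ) + 1)⁻¹ (inv_ne_zero (hR n).ne'))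
  · exact ((hχ.differentiable (by simp) _).hasDerivAt.comp t
      ((hasDerivAt_id t).div_const _)).mul (h.hasDerivAt t)
  · rw [abs_mul]
    calc _ ≤ 1 * (A * (1 + |t|) ^ (α - 2)) := by
          gcongr
          · exact hχ1 _
          · exact h.abs_le t
      _ ≤ _ := by
          rw [one_mul]
          gcongr
          nlinarith
  · have hpow : (1 + |t|)⁻¹ * (1 + |t|) ^ (α - 2) = (1 + |t|) ^ (α - 3) := by
      rw [← Real.rpow_neg_one, ← Real.rpow_add (by positivity)]; congr 1; ring
    refine (abs_add_le _ _).trans ?_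
    rw [abs_mul _ (f t), abs_mul _ (f' t)]
    calc _ ≤ C * (1 + |t|)⁻¹ * (A * (1 + |t|) ^ (α - 2)) + 1 * (A * (1 + |t|) ^ (α - 3)) := by
          gcongr
          · exact hχd n t
          · exact h.abs_le t
          · exact hχ1 _
          · exact h.abs_deriv_le t
      _ = _ := by linear_combination A * C * hpow
  · refine tendsto_const_nhds.congr' ?_
    filter_upwards [eventually_ge_atTop ⌈|x|⌉₊] with n hn
    rw [χ.one_of_mem_closedBall, one_mul]
    have : |x| ≤ n := Nat.ceil_le.1 hn
    have hin : χ.rIn = 1 := rfl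
    rw [mem_closedBall_zero_iff, Real.norm_eq_abs, abs_div, abs_of_pos (hR n), hin,
      div_le_one (hR n)]
    linarith

/-- Liouville theorem for the one-sided Marchaud fractional equation
`∂_t^α u = 0` on `ℝ`: every distributional solution `u ∈ 𝓛_α(ℝ)` is a.e. constant. -/
theorem liouville_marchaud
    (α : ℝ) (hα0 : 0 < α) (hα1 : α < 1)
    (u : ℝ → ℝ)
    (hu_loc : LocallyIntegrable u)
    (hu_space : Integrable (fun t : ℝ => |u t| / (1 + |t| ^ (1 + α))))
    (hu_sol : ∀ φ : SchwartzMap ℝ ℝ, ∫ t : ℝ, u t * marchaudRight1d α (⇑φ) t = 0) :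
    ∃ c : ℝ, ∀ᵐ t : ℝ ∂volume, u t = c := by
  refine hu_loc.ae_eq_const_of_integral_mul_deriv_eq_zero fun η hη hηc => ?_
  have hη' : ContDiff ℝ ∞ (deriv η) := (contDiff_infty_iff_deriv.1 hη).2
  obtain ⟨A, -, hA, hA'⟩ := exists_abs_rightFracIntegral_deriv_le hα0 hα1 hη hηc
  have hdecay : MarchaudDecay α A (rightFracIntegral α (deriv η))
      (rightFracIntegral α (deriv (deriv η))) :=
    ⟨hasDerivAt_rightFracIntegral hα0 hη' hηc.deriv, hA, hA'⟩
  obtain ⟨c, hc, hcη⟩ := exists_marchaudRight1d_rightFracIntegral hα0 hα1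
  obtain ⟨A', F, F', hF, hFc, hFd, hlim⟩ :=
    hdecay.exists_compactSupport_approx (contDiff_rightFracIntegral hα0 hη' hηc.deriv)
  obtain ⟨K, hK⟩ := MarchaudDecay.exists_abs_marchaudRight1d_le hα0 hα1 A'
  have hconv : Tendsto (fun n => ∫ t, u t * marchaudRight1d α (F n) t) atTop
      (𝓝 (∫ t, u t * marchaudRight1d α (rightFracIntegral α (deriv η)) t)) := by
    refine tendsto_integral_of_dominated_convergence
      (fun t => K * (|u t| / (1 + |t| ^ (1 + α)))) (fun n => ?_) (hu_space.const_mul K)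
      (fun n => Eventually.of_forall fun t => ?_) (Eventually.of_forall fun t => ?_)
    · exact hu_loc.aestronglyMeasurable.mul
        (measurable_marchaudRight1d (hFd n).continuous).aestronglyMeasurable
    · rw [norm_mul, Real.norm_eq_abs, Real.norm_eq_abs]
      calc _ ≤ |u t| * (K / (1 + |t| ^ (1 + α))) := by
            gcongr
            exact hK _ _ (hFd n) t
        _ = _ := by ring
    · exact (MarchaudDecay.tendsto_marchaudRight1d hα0 hα1 hFd hlim t).const_mul _
  have hzero : ∀ n, ∫ t, u t * marchaudRight1d α (F n) t = 0 := fun n =>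
    hu_sol ((hFc n).toSchwartzMap (hF n))
  have key := tendsto_nhds_unique hconv (tendsto_const_nhds.congr fun n => (hzero n).symm)
  simp_rw [hcη A _ hη' hηc.deriv hdecay, mul_left_comm (u _) c, integral_const_mul] at key
  exact (mul_eq_zero.1 key).resolve_left hc
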